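/- Let L and N be positive integers, and let P_s, P_n, P_i, N_d, λ be positive real numbers with N_d ≤ N·λ. Set γ_n = L·λ·P_n/P_s, γ_i = N·L·λ·P_i/P_s, γ_m = γ_i + γ_n·N_d², R = N_d/(N·λ), ξ₁ = L·N_d/γ_n, and ξ₂ = L·N_d³/γ_m. Then ∫₀^∞ [R·Q(√(2·t·ξ₂)) + (1−R)·Q(√(2·t·ξ₁))] · (L^L/(L−1)!) · t^{L−1} · e^{−L·t} dt = 1/2 − (1/2)·[R·Ψ₂ + (1−R)·Ψ₁], where Ψ₁ = Σ_{i=0}^{L−1} C(2i, i)·(γ_n/(4·N_d))^i·(N_d/(N_d + γ_n))^{i+1/2} and Ψ₂ = Σ_{i=0}^{L−1} C(2i, i)·(γ_m/(4·N_d³))^i·(N_d³/(N_d³ + γ_m))^{i+1/2}. -/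

import Mathlib

/-- The Gaussian tail function `Q(x) = ∫_x^∞ (1/√(2π)) e^{−u²/2} du`. -/
noncomputable def gaussQ (x : ℝ) : ℝ :=
  ∫ u in Set.Ioi x, (1 / Real.sqrt (2 * Real.pi)) * Real.exp (-u ^ 2 / 2)

open MeasureTheory Filter Topology in
lemma aux_gauss_integrable :
    Integrable (fun u : ℝ => (1 / Real.sqrt (2 * Real.pi)) * Real.exp (-u ^ 2 / 2)) := by
  have h := (integrable_exp_neg_mul_sq (b := 1/2) (by norm_num)).const_mul
    (1 / Real.sqrt (2 * Real.pi))
  refine h.congr (Eventually.of_forall fun u => ?_)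
  show _ = _
  simp only
  congr 2
  ring

open MeasureTheory Filter Topology in
lemma aux_gaussQ_eq (x : ℝ) : gaussQ x = gaussQ 0 -
    ∫ u in (0:ℝ)..x, (1 / Real.sqrt (2 * Real.pi)) * Real.exp (-u ^ 2 / 2) := by
  have := intervalIntegral.integral_interval_add_Ioi
    (aux_gauss_integrable.integrableOn (s := Set.Ioi 0))
    (aux_gauss_integrable.integrableOn (s := Set.Ioi x))
  unfold gaussQ
  linarith

open MeasureTheory Filter Topology in
lemma aux_gaussQ_hasDerivAt (x : ℝ) :
    HasDerivAt gaussQ (-((1 / Real.sqrt (2 * Real.pi)) * Real.exp (-x ^ 2 / 2))) x := by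
  have hc : Continuous (fun u : ℝ => (1 / Real.sqrt (2 * Real.pi)) * Real.exp (-u ^ 2 / 2)) := by
    fun_prop
  have h := ((hc.integral_hasStrictDerivAt 0 x).hasDerivAt).const_sub (gaussQ 0)
  have e : gaussQ = fun y => gaussQ 0 -
    ∫ u in (0:ℝ)..y, (1 / Real.sqrt (2 * Real.pi)) * Real.exp (-u ^ 2 / 2) :=
    funext aux_gaussQ_eq
  rw [e]
  exact h

open MeasureTheory Filter Topology in
lemma aux_gaussQ_zero : gaussQ 0 = 1 / 2 := by
  unfold gaussQ
  rw [integral_const_mul]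
  have h := integral_gaussian_Ioi (1/2)
  have e : ∀ u : ℝ, Real.exp (-u ^ 2 / 2) = Real.exp (-(1/2) * u ^ 2) := by
    intro u; congr 1; ring
  simp_rw [e]
  rw [h]
  have : Real.pi / (1/2) = 2 * Real.pi := by ring
  rw [this]
  have : Real.sqrt (2 * Real.pi) ≠ 0 := by positivity
  field_simp

open MeasureTheory Filter Topology in
lemma aux_gaussQ_continuous : Continuous gaussQ :=
  continuous_iff_continuousAt.2 fun x => (aux_gaussQ_hasDerivAt x).continuousAt

open MeasureTheory Filter Topology in
lemma aux_gaussQ_bound (x : ℝ) :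
    ‖gaussQ x‖ ≤ ∫ u : ℝ, (1 / Real.sqrt (2 * Real.pi)) * Real.exp (-u ^ 2 / 2) := by
  have h0 : 0 ≤ gaussQ x := by
    unfold gaussQ
    exact integral_nonneg fun u => by positivity
  rw [Real.norm_of_nonneg h0]
  unfold gaussQ
  exact setIntegral_le_integral aux_gauss_integrable
    (Eventually.of_forall fun u => by simp only [Pi.zero_apply]; positivity)

lemma aux_Gamma_half (i : ℕ) : Real.Gamma ((i : ℝ) + 1 / 2) =
    (Nat.choose (2 * i) i : ℝ) * (i.factorial : ℝ) / 4 ^ i * Real.sqrt Real.pi := by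
  induction i with
  | zero => simp [-one_div, Real.Gamma_one_half_eq]
  | succ k ih =>
    have e : ((k + 1 : ℕ) : ℝ) + 1 / 2 = ((k : ℝ) + 1 / 2) + 1 := by push_cast; ring
    rw [e, Real.Gamma_add_one (by positivity), ih]
    have h := Nat.succ_mul_centralBinom_succ k
    rw [Nat.centralBinom_eq_two_mul_choose, Nat.centralBinom_eq_two_mul_choose] at h
    have h' : ((k : ℝ) + 1) * (Nat.choose (2 * (k + 1)) (k + 1) : ℝ) =
      2 * (2 * k + 1) * (Nat.choose (2 * k) k : ℝ) := by exact_mod_cast h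
    have e2 : (Nat.choose (2 * (k + 1)) (k + 1) : ℝ) * ((k + 1).factorial : ℝ) =
      2 * (2 * k + 1) * (Nat.choose (2 * k) k : ℝ) * k.factorial := by
      rw [Nat.factorial_succ]; push_cast
      rw [← h']; ring
    rw [e2, pow_succ]
    field_simp
    ring

/-- Survival function of the Gamma distribution with integer shape. -/
noncomputable def auxS (n : ℕ) (a t : ℝ) : ℝ :=
  ∑ i ∈ Finset.range (n + 1), (a * t) ^ i / (i.factorial : ℝ) * Real.exp (-a * t)

lemma auxS_hasDerivAt (n : ℕ) (a t : ℝ) :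
    HasDerivAt (auxS n a) (-(a ^ (n + 1) / (n.factorial : ℝ) * t ^ n * Real.exp (-a * t))) t := by
  have he : HasDerivAt (fun t : ℝ => Real.exp (-a * t)) (Real.exp (-a * t) * (-a)) t := by
    have := ((hasDerivAt_id t).const_mul (-a)).exp
    simpa using this
  induction n with
  | zero =>
    have : auxS 0 a = fun t => Real.exp (-a * t) := by
      funext s; simp [auxS]
    rw [this]
    convert he using 1
    simp; ring
  | succ k ih =>
    have e : auxS (k + 1) a = fun t => auxS k a t +
        (a * t) ^ (k + 1) / ((k + 1).factorial : ℝ) * Real.exp (-a * t) := by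
      funext s; unfold auxS; rw [Finset.sum_range_succ]
    rw [e]
    have hp : HasDerivAt (fun t : ℝ => (a * t) ^ (k + 1) / ((k + 1).factorial : ℝ))
        (((k + 1 : ℕ) : ℝ) * (a * t) ^ k * a / ((k + 1).factorial : ℝ)) t := by
      have := (((hasDerivAt_id t).const_mul a).pow (k + 1)).div_const ((k + 1).factorial : ℝ)
      simpa using this
    refine (ih.add (hp.mul he)).congr_deriv ?_
    rw [Nat.factorial_succ]
    push_cast
    have : (k.factorial : ℝ) ≠ 0 := by positivity
    have : (k : ℝ) + 1 ≠ 0 := by positivity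
    field_simp
    ring

open MeasureTheory Filter Topology in
lemma auxS_tendsto (n : ℕ) (a : ℝ) (ha : 0 < a) : Tendsto (auxS n a) atTop (𝓝 0) := by
  have h : Tendsto (fun t => ∑ i ∈ Finset.range (n + 1),
      (a * t) ^ i / (i.factorial : ℝ) * Real.exp (-a * t)) atTop
      (𝓝 (∑ i ∈ Finset.range (n + 1), (0 : ℝ))) := by
    refine tendsto_finsetSum _ fun i _ => ?_
    have h1 := (Real.tendsto_pow_mul_exp_neg_atTop_nhds_zero i).comp
      (tendsto_id.const_mul_atTop ha)
    have h2 := h1.const_mul (1 / (i.factorial : ℝ))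
    rw [mul_zero] at h2
    refine h2.congr fun t => ?_
    simp only [Function.comp, id]
    rw [neg_mul]; ring
  rw [Finset.sum_const_zero] at h
  exact h

open MeasureTheory Filter Topology in
lemma aux_int (s r : ℝ) (hs : 0 < s) (hr : 0 < r) :
    IntegrableOn (fun t : ℝ => t ^ (s - 1) * Real.exp (-(r * t))) (Set.Ioi 0) :=
  .of_integral_ne_zero (by
    rw [Real.integral_rpow_mul_exp_neg_mul_Ioi hs hr]
    have := Real.Gamma_pos_of_pos hs
    positivity)

open MeasureTheory Filter Topology in
lemma aux_density_int (n : ℕ) (a ξ : ℝ) (ha : 0 < a) :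
    IntegrableOn (fun t : ℝ => gaussQ (Real.sqrt (2 * t * ξ)) *
      (a ^ (n + 1) / (n.factorial : ℝ) * t ^ n * Real.exp (-a * t))) (Set.Ioi 0) := by
  have h := (aux_int (n + 1) a (by positivity) ha).const_mul (a ^ (n + 1) / (n.factorial : ℝ))
  have h' : IntegrableOn (fun t : ℝ => a ^ (n + 1) / (n.factorial : ℝ) * t ^ n *
      Real.exp (-a * t)) (Set.Ioi 0) := by
    refine h.congr (Eventually.of_forall fun t => ?_)
    simp only [add_sub_cancel_right, Real.rpow_natCast]
    rw [neg_mul]; ring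
  refine Integrable.bdd_mul (c := ∫ u : ℝ, (1 / Real.sqrt (2 * Real.pi)) * Real.exp (-u ^ 2 / 2))
    h' ?_ (Eventually.of_forall fun t => aux_gaussQ_bound _)
  exact (aux_gaussQ_continuous.comp (by fun_prop)).aestronglyMeasurable

lemma aux_Q_deriv (ξ t : ℝ) (hξ : 0 < ξ) (ht : 0 < t) :
    HasDerivAt (fun t => gaussQ (Real.sqrt (2 * t * ξ)))
      (-(Real.sqrt ξ / (2 * Real.sqrt Real.pi) * t ^ (-(1/2) : ℝ) * Real.exp (-(ξ * t)))) t := by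
  have h1 : HasDerivAt (fun t : ℝ => 2 * t * ξ) (2 * ξ) t := by
    have := ((hasDerivAt_id t).const_mul 2).mul_const ξ
    simpa using this
  have h2 := h1.sqrt (by positivity)
  have h3 := (aux_gaussQ_hasDerivAt (Real.sqrt (2 * t * ξ))).comp t h2
  refine h3.congr_deriv ?_
  rw [Real.sq_sqrt (by positivity), Real.rpow_neg ht.le, ← Real.sqrt_eq_rpow,
    show 2 * t * ξ = 2 * (t * ξ) by ring, Real.sqrt_mul (by norm_num) Real.pi,
    Real.sqrt_mul (by norm_num) (t * ξ), Real.sqrt_mul ht.le, show -(2 * (t * ξ)) / 2 = -(ξ * t) by ring]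
  have a1 : Real.sqrt ξ ≠ 0 := by positivity
  have a2 : Real.sqrt t ≠ 0 := by positivity
  have a3 : Real.sqrt 2 ≠ 0 := by positivity
  have a4 : Real.sqrt Real.pi ≠ 0 := by positivity
  have b1 : Real.sqrt ξ ^ 2 = ξ := Real.sq_sqrt hξ.le
  have b3 : Real.sqrt 2 ^ 2 = 2 := Real.sq_sqrt (by norm_num)
  field_simp
  rw [b1, b3]
  ring

open MeasureTheory Filter Topology in
lemma aux_main (n : ℕ) (a ξ : ℝ) (ha : 0 < a) (hξ : 0 < ξ) :
    ∫ t in Set.Ioi (0 : ℝ), gaussQ (Real.sqrt (2 * t * ξ)) *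
      (a ^ (n + 1) / (n.factorial : ℝ) * t ^ n * Real.exp (-a * t)) =
    1 / 2 - 1 / 2 * ∑ i ∈ Finset.range (n + 1), (Nat.choose (2 * i) i : ℝ) * (a / 4) ^ i *
      Real.sqrt ξ * (1 / (a + ξ)) ^ ((i : ℝ) + 1 / 2) := by
  have hterm : ∀ t ∈ Set.Ioi (0 : ℝ),
      ∑ i ∈ Finset.range (n + 1), (Real.sqrt ξ / (2 * Real.sqrt Real.pi) * a ^ i /
        (i.factorial : ℝ)) * (t ^ (((i : ℝ) + 1 / 2) - 1) * Real.exp (-((a + ξ) * t))) =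
      Real.sqrt ξ / (2 * Real.sqrt Real.pi) * t ^ (-(1/2) : ℝ) * Real.exp (-(ξ * t)) *
        auxS n a t := by
    intro t ht
    have ht : 0 < t := ht
    unfold auxS
    rw [Finset.mul_sum]
    refine Finset.sum_congr rfl fun i _ => ?_
    rw [show ((i : ℝ) + 1 / 2) - 1 = -(1/2) + i by ring, Real.rpow_add ht, Real.rpow_natCast,
      show -((a + ξ) * t) = -(ξ * t) + -a * t by ring, Real.exp_add, mul_pow]
    ring
  have hti : ∀ i ∈ Finset.range (n + 1), IntegrableOn (fun t : ℝ =>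
      (Real.sqrt ξ / (2 * Real.sqrt Real.pi) * a ^ i /
        (i.factorial : ℝ)) * (t ^ (((i : ℝ) + 1 / 2) - 1) * Real.exp (-((a + ξ) * t))))
      (Set.Ioi 0) := fun i _ =>
    (aux_int ((i : ℝ) + 1 / 2) (a + ξ) (by positivity) (by positivity)).const_mul _
  have hA : IntegrableOn (fun t : ℝ => Real.sqrt ξ / (2 * Real.sqrt Real.pi) * t ^ (-(1/2) : ℝ) *
      Real.exp (-(ξ * t)) * auxS n a t) (Set.Ioi 0) :=
    IntegrableOn.congr_fun (integrable_finsetSum _ hti) hterm measurableSet_Ioi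
  have hB := aux_density_int n a ξ ha
  have hval : ∫ t in Set.Ioi (0 : ℝ), Real.sqrt ξ / (2 * Real.sqrt Real.pi) * t ^ (-(1/2) : ℝ) *
      Real.exp (-(ξ * t)) * auxS n a t =
      1 / 2 * ∑ i ∈ Finset.range (n + 1), (Nat.choose (2 * i) i : ℝ) * (a / 4) ^ i *
      Real.sqrt ξ * (1 / (a + ξ)) ^ ((i : ℝ) + 1 / 2) := by
    rw [← setIntegral_congr_fun measurableSet_Ioi hterm, integral_finsetSum _ hti, Finset.mul_sum]
    refine Finset.sum_congr rfl fun i _ => ?_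
    rw [integral_const_mul, Real.integral_rpow_mul_exp_neg_mul_Ioi (by positivity) (by positivity),
      aux_Gamma_half, div_pow]
    have : (i.factorial : ℝ) ≠ 0 := by positivity
    have a4 : Real.sqrt Real.pi ≠ 0 := by positivity
    generalize (1 / (a + ξ)) ^ ((i : ℝ) + 1 / 2) = z
    field_simp
  have hS0 : auxS n a 0 = 1 := by
    unfold auxS
    rw [Finset.sum_range_succ']
    simp
  have hcont : Continuous (fun t => gaussQ (Real.sqrt (2 * t * ξ)) * auxS n a t) := by
    refine (aux_gaussQ_continuous.comp (by fun_prop)).mul ?_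
    exact continuous_iff_continuousAt.2 fun x => (auxS_hasDerivAt n a x).continuousAt
  have hlim : Tendsto (fun t => gaussQ (Real.sqrt (2 * t * ξ)) * auxS n a t) atTop (𝓝 0) := by
    have hz := (auxS_tendsto n a ha).norm.const_mul
      (∫ u : ℝ, (1 / Real.sqrt (2 * Real.pi)) * Real.exp (-u ^ 2 / 2))
    rw [norm_zero, mul_zero] at hz
    refine squeeze_zero_norm (fun t => ?_) hz
    rw [norm_mul]
    exact mul_le_mul_of_nonneg_right (aux_gaussQ_bound _) (norm_nonneg _)
  have hftc := integral_Ioi_of_hasDerivAt_of_tendsto (a := (0:ℝ)) hcont.continuousWithinAt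
    (fun t ht => (aux_Q_deriv ξ t hξ ht).mul (auxS_hasDerivAt n a t))
    (by
      refine (hA.neg.sub hB).congr (Eventually.of_forall fun t => ?_)
      simp only [Pi.sub_apply, Pi.neg_apply]
      ring) hlim
  have e : ∀ t : ℝ, -(Real.sqrt ξ / (2 * Real.sqrt Real.pi) * t ^ (-(1/2) : ℝ) *
      Real.exp (-(ξ * t))) * auxS n a t + gaussQ (Real.sqrt (2 * t * ξ)) *
        -(a ^ (n + 1) / (n.factorial : ℝ) * t ^ n * Real.exp (-a * t)) =
      -(Real.sqrt ξ / (2 * Real.sqrt Real.pi) * t ^ (-(1/2) : ℝ) *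
      Real.exp (-(ξ * t)) * auxS n a t) - gaussQ (Real.sqrt (2 * t * ξ)) *
        (a ^ (n + 1) / (n.factorial : ℝ) * t ^ n * Real.exp (-a * t)) := by
    intro t; ring
  simp_rw [e] at hftc
  rw [integral_sub (by exact hA.neg) hB, integral_neg, hval] at hftc
  simp only [mul_zero, zero_mul, Real.sqrt_zero, aux_gaussQ_zero, hS0] at hftc
  linarith

lemma aux_term (i : ℕ) (a D g : ℝ) (ha : 0 < a) (hD : 0 < D) (hg : 0 < g) :
    (a / 4) ^ i * Real.sqrt (a * D / g) * (1 / (a + a * D / g)) ^ ((i : ℝ) + 1 / 2) =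
    (g / (4 * D)) ^ i * (D / (D + g)) ^ ((i : ℝ) + 1 / 2) := by
  have e : 1 / (a + a * D / g) = (g / (a * D)) * (D / (D + g)) := by
    field_simp
    ring
  rw [e, Real.mul_rpow (by positivity) (by positivity), ← mul_assoc]
  congr 1
  rw [Real.rpow_add (by positivity), Real.rpow_natCast, ← Real.sqrt_eq_rpow]
  have h : Real.sqrt (a * D / g) * Real.sqrt (g / (a * D)) = 1 := by
    rw [← Real.sqrt_mul (by positivity)]
    rw [show a * D / g * (g / (a * D)) = 1 by field_simp, Real.sqrt_one]
  calc (a / 4) ^ i * Real.sqrt (a * D / g) * ((g / (a * D)) ^ i * Real.sqrt (g / (a * D)))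
      = ((a / 4) * (g / (a * D))) ^ i * (Real.sqrt (a * D / g) * Real.sqrt (g / (a * D))) := by
        rw [mul_pow]; ring
    _ = _ := by
        rw [h, mul_one]; congr 1; field_simp

lemma aux_main' (n : ℕ) (a D g : ℝ) (ha : 0 < a) (hD : 0 < D) (hg : 0 < g) :
    ∫ t in Set.Ioi (0 : ℝ), gaussQ (Real.sqrt (2 * t * (a * D / g))) *
      (a ^ (n + 1) / (n.factorial : ℝ) * t ^ n * Real.exp (-a * t)) =
    1 / 2 - 1 / 2 * ∑ i ∈ Finset.range (n + 1), (Nat.choose (2 * i) i : ℝ) * (g / (4 * D)) ^ i *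
      (D / (D + g)) ^ ((i : ℝ) + 1 / 2) := by
  rw [aux_main n a _ ha (by positivity)]
  congr 2
  refine Finset.sum_congr rfl fun i _ => ?_
  have h := aux_term i a D g ha hD hg
  calc _ = (Nat.choose (2 * i) i : ℝ) * ((a / 4) ^ i * Real.sqrt (a * D / g) *
        (1 / (a + a * D / g)) ^ ((i : ℝ) + 1 / 2)) := by ring
    _ = _ := by rw [h, mul_assoc]

/-- With `γ_n = Lλ P_n/P_s`, `γ_i = NLλ P_i/P_s`, `γ_m = γ_i + γ_n N_d²`, `R = N_d/(Nλ)`,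
`ξ₁ = L N_d/γ_n`, `ξ₂ = L N_d³/γ_m`, the expectation of
`R·Q(√(2tξ₂)) + (1−R)·Q(√(2tξ₁))` under the Gamma density `(L^L/(L−1)!) t^{L−1} e^{−Lt}`
equals `1/2 − (1/2)[R·Ψ₂ + (1−R)·Ψ₁]`, where
`Ψ₁ = Σ_{i<L} C(2i,i)(γ_n/(4N_d))^i (N_d/(N_d+γ_n))^{i+1/2}` and
`Ψ₂ = Σ_{i<L} C(2i,i)(γ_m/(4N_d³))^i (N_d³/(N_d³+γ_m))^{i+1/2}`. -/
theorem BER_nonstationary_interference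
    (L N : ℕ) (hL : 0 < L) (hN : 0 < N)
    (Ps Pn Pi Nd lam : ℝ)
    (hPs : 0 < Ps) (hPn : 0 < Pn) (hPi : 0 < Pi) (hNd : 0 < Nd) (hlam : 0 < lam)
    (hNdle : Nd ≤ (N : ℝ) * lam)
    (γn γi γm R ξ₁ ξ₂ : ℝ)
    (hγn : γn = (L : ℝ) * lam * Pn / Ps)
    (hγi : γi = (N : ℝ) * (L : ℝ) * lam * Pi / Ps)
    (hγm : γm = γi + γn * Nd ^ 2)
    (hR : R = Nd / ((N : ℝ) * lam))
    (hξ₁ : ξ₁ = (L : ℝ) * Nd / γn)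
    (hξ₂ : ξ₂ = (L : ℝ) * Nd ^ 3 / γm) :
    ∫ t in Set.Ioi (0 : ℝ),
        (R * gaussQ (Real.sqrt (2 * t * ξ₂)) + (1 - R) * gaussQ (Real.sqrt (2 * t * ξ₁))) *
          ((L : ℝ) ^ L / (Nat.factorial (L - 1) : ℝ)) * t ^ (L - 1) *
          Real.exp (-(L : ℝ) * t)
      = 1 / 2 - 1 / 2 *
          (R * ∑ i ∈ Finset.range L, (Nat.choose (2 * i) i : ℝ) * (γm / (4 * Nd ^ 3)) ^ i *
              (Nd ^ 3 / (Nd ^ 3 + γm)) ^ ((i : ℝ) + 1 / 2) +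
            (1 - R) * ∑ i ∈ Finset.range L, (Nat.choose (2 * i) i : ℝ) * (γn / (4 * Nd)) ^ i *
              (Nd / (Nd + γn)) ^ ((i : ℝ) + 1 / 2)) := by
  have hL' : (0 : ℝ) < L := by exact_mod_cast hL
  have hN' : (0 : ℝ) < N := by exact_mod_cast hN
  have hgn : 0 < γn := by rw [hγn]; positivity
  have hgi : 0 < γi := by rw [hγi]; positivity
  have hgm : 0 < γm := by rw [hγm]; positivity
  obtain ⟨n, rfl⟩ : ∃ n, L = n + 1 := ⟨L - 1, by omega⟩
  have m1 := aux_main' n ((n + 1 : ℕ) : ℝ) Nd γn hL' hNd hgn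
  have m2 := aux_main' n ((n + 1 : ℕ) : ℝ) (Nd ^ 3) γm hL' (by positivity) hgm
  have i1 := aux_density_int n ((n + 1 : ℕ) : ℝ) ξ₁ hL'
  have i2 := aux_density_int n ((n + 1 : ℕ) : ℝ) ξ₂ hL'
  rw [← hξ₁] at m1
  rw [← hξ₂] at m2
  have e : ∀ t : ℝ, (R * gaussQ (Real.sqrt (2 * t * ξ₂)) +
        (1 - R) * gaussQ (Real.sqrt (2 * t * ξ₁))) *
          (((n + 1 : ℕ) : ℝ) ^ (n + 1) / (Nat.factorial (n + 1 - 1) : ℝ)) * t ^ (n + 1 - 1) *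
          Real.exp (-((n + 1 : ℕ) : ℝ) * t) =
      R * (gaussQ (Real.sqrt (2 * t * ξ₂)) * (((n + 1 : ℕ) : ℝ) ^ (n + 1) / (n.factorial : ℝ) *
        t ^ n * Real.exp (-((n + 1 : ℕ) : ℝ) * t))) +
      (1 - R) * (gaussQ (Real.sqrt (2 * t * ξ₁)) * (((n + 1 : ℕ) : ℝ) ^ (n + 1) /
        (n.factorial : ℝ) * t ^ n * Real.exp (-((n + 1 : ℕ) : ℝ) * t))) := by
    intro t
    rw [Nat.add_sub_cancel]
    ring
  simp_rw [e]
  rw [MeasureTheory.integral_add (i2.const_mul R) (i1.const_mul (1 - R)),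
    MeasureTheory.integral_const_mul, MeasureTheory.integral_const_mul, m1, m2]
  ring
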